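/- Let ⟨α,α'⟩ be an (m,n)-shuffle. The assignment sending each i ∈ ⌞⟨α,α'⟩ to the unique (m,n)-shuffle ⟨β,β'⟩ with β(j) = α(j) for j ≠ i and β(i) = α(i) − 1 is a bijection between the lower-right corner set ⌞⟨α,α'⟩ and the set of immediate predecessors of ⟨α,α'⟩ in the poset of (m,n)-shuffles. -/

import Mathlib

/-- Extend a map `Fin (N+1) → Fin (M+1)` to a `ℕ`-valued map on all of `ℕ`,
clamping the input to the range `{0, …, N}`. -/
def extendFin {N M : ℕ} (f : Fin (N + 1) → Fin (M + 1)) (i : ℕ) : ℕ :=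
  (f ⟨min i N, Nat.lt_succ_of_le (min_le_right i N)⟩ : ℕ)

/-- `⟨α, α'⟩` is an `(m,n)`-shuffle: both maps are monotone surjections and
`α i + α' i = i` for all `i`. -/
def IsShuffle (m n : ℕ) (α : Fin (m + n + 1) → Fin (m + 1))
    (α' : Fin (m + n + 1) → Fin (n + 1)) : Prop :=
  Monotone α ∧ Monotone α' ∧ Function.Surjective α ∧ Function.Surjective α' ∧
    ∀ i : Fin (m + n + 1), (α i : ℕ) + (α' i : ℕ) = (i : ℕ)

/-- The pointwise order on `(m,n)`-shuffles (a shuffle is determined by its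
first component). -/
def ShuffleLE (m n : ℕ) (α β : Fin (m + n + 1) → Fin (m + 1)) : Prop :=
  ∀ i, α i ≤ β i

/-- The strict pointwise order on `(m,n)`-shuffles. -/
def ShuffleLT (m n : ℕ) (α β : Fin (m + n + 1) → Fin (m + 1)) : Prop :=
  ShuffleLE m n α β ∧ α ≠ β

/-- The lower-right corner set `⌞⟨α,α'⟩`: all `i` with `1 ≤ i ≤ m+n-1` such that
`α(i+1) = α(i) = α(i-1)+1`. -/
def lrCorner (m n : ℕ) (α : Fin (m + n + 1) → Fin (m + 1)) : Set ℕ :=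
  {i | 1 ≤ i ∧ i + 1 ≤ m + n ∧
    extendFin α (i + 1) = extendFin α i ∧ extendFin α i = extendFin α (i - 1) + 1}

/-- The upper-left corner set `⌜⟨α,α'⟩`: all `i` with `1 ≤ i ≤ m+n-1` such that
`α(i+1) = α(i)+1 = α(i-1)+1`. -/
def ulCorner (m n : ℕ) (α : Fin (m + n + 1) → Fin (m + 1)) : Set ℕ :=
  {i | 1 ≤ i ∧ i + 1 ≤ m + n ∧
    extendFin α (i + 1) = extendFin α i + 1 ∧ extendFin α i = extendFin α (i - 1)}

/-- `⟨β,β'⟩` is an immediate predecessor of `⟨α,α'⟩`: it is a shuffle, `β < α`,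
and no shuffle lies strictly between them. -/
def IsImmPred (m n : ℕ)
    (β : Fin (m + n + 1) → Fin (m + 1)) (β' : Fin (m + n + 1) → Fin (n + 1))
    (α : Fin (m + n + 1) → Fin (m + 1)) (α' : Fin (m + n + 1) → Fin (n + 1)) : Prop :=
  IsShuffle m n β β' ∧ ShuffleLT m n β α ∧
    ∀ (γ : Fin (m + n + 1) → Fin (m + 1)) (γ' : Fin (m + n + 1) → Fin (n + 1)),
      IsShuffle m n γ γ' → ¬ (ShuffleLT m n β γ ∧ ShuffleLT m n γ α)

/-- `⟨γ,γ'⟩` is an immediate successor of `⟨α,α'⟩`: it is a shuffle, `α < γ`,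
and no shuffle lies strictly between them. -/
def IsImmSucc (m n : ℕ)
    (γ : Fin (m + n + 1) → Fin (m + 1)) (γ' : Fin (m + n + 1) → Fin (n + 1))
    (α : Fin (m + n + 1) → Fin (m + 1)) (α' : Fin (m + n + 1) → Fin (n + 1)) : Prop :=
  IsShuffle m n γ γ' ∧ ShuffleLT m n α γ ∧
    ∀ (δ : Fin (m + n + 1) → Fin (m + 1)) (δ' : Fin (m + n + 1) → Fin (n + 1)),
      IsShuffle m n δ δ' → ¬ (ShuffleLT m n α δ ∧ ShuffleLT m n δ γ)

/-!
A shuffle is a lattice path of unit steps: surjectivity of `α` and `α'` follows from monotonicity of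
both together with `α i + α' i = i`. At a lower-right corner `k` the path enters with a step of `α`
and leaves with a step of `α'`, so lowering `α k` and raising `α' k` by one keeps both monotone.
The lowered function is covered by `α` already in the poset of all functions.

Conversely, let `β < α` be shuffles. Where `α` first exceeds `β` it makes a step. As long as `α`
keeps stepping it stays above `β`, and since both end at `m` it must stop doing so; the index where
it stops is a corner `k` with `β k < α k`. Hence `β` lies below the shuffle obtained by lowering `α`
at `k`, and equals it when `β` is an immediate predecessor.
-/

open Function Order

theorem monotone_update {ι A : Type*} [DecidableEq ι] [PartialOrder ι] [Preorder A] {f : ι → A}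
    (hf : Monotone f) {k : ι} {a : A} (h_below : ∀ j < k, f j ≤ a) (h_above : ∀ j > k, a ≤ f j) :
    Monotone (update f k a) := by
  intro i j hij
  rcases eq_or_ne i k with hi | hi <;> rcases eq_or_ne j k with hj | hj
  · rw [hi, hj]
  · subst hi
    simpa [hj] using h_above j (lt_of_le_of_ne hij hj.symm)
  · subst hj
    simpa [hi] using h_below i (lt_of_le_of_ne hij hi)
  · simpa [hi, hj] using hf hij

section UpdatePred

variable {ι A : Type*} [DecidableEq ι] [PartialOrder A] [PredOrder A] {f g : ι → A} {k : ι}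

theorem update_pred_covBy (hk : ¬IsMin (f k)) : update f k (pred (f k)) ⋖ f :=
  Pi.covBy_iff.2 ⟨k, by simpa using pred_covBy_of_not_isMin hk, fun _ hj ↦ update_of_ne hj _ _⟩

theorem le_update_pred (hgf : g ≤ f) (hk : g k < f k) : g ≤ update f k (pred (f k)) :=
  le_update_iff.2 ⟨le_pred_of_lt hk, fun j _ ↦ hgf j⟩

theorem eq_of_update_pred_eq {l : ι} (hk : ¬IsMin (f k))
    (h : update f k (pred (f k)) = update f l (pred (f l))) : k = l := by
  by_contra hkl
  have h_pred : pred (f k) = f k := by simpa [hkl] using congrFun h k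
  exact hk (pred_eq_iff_isMin.1 h_pred)

end UpdatePred

theorem val_pred_eq_sub_one {M : ℕ} (a : Fin (M + 1)) : ((pred a : Fin (M + 1)) : ℕ) = a - 1 := by
  cases a using Fin.cases <;> simp

theorem val_succ_eq_add_one {M : ℕ} {a : Fin M} (ha : ¬IsMax a) : ((succ a : Fin M) : ℕ) = a + 1 :=
  (Nat.covBy_iff_add_one_eq.1 (Fin.covBy_iff.1 (covBy_succ_of_not_isMax ha))).symm

section NatSequences

variable {a b : ℕ → ℕ}

theorem exists_apply_eq_of_le_add_one (h_step : ∀ i, a (i + 1) ≤ a i + 1) {k N : ℕ}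
    (h_zero : a 0 ≤ k) (hN : k ≤ a N) : ∃ i, a i = k := by
  rcases hN.eq_or_lt with h | h
  · exact ⟨N, h.symm⟩
  obtain ⟨i, hi, hi'⟩ : ∃ i, ¬k < a i ∧ k < a (i + 1) :=
    Nat.exists_not_and_succ_of_not_zero_of_exists h_zero.not_gt ⟨N, h⟩
  have := h_step i
  exact ⟨i, by omega⟩

theorem exists_step_above (h_step : ∀ i, a (i + 1) ≤ a i + 1) (hb : Monotone b)
    (h_zero : a 0 ≤ b 0) {j : ℕ} (hj : b j < a j) :
    ∃ i, b (i + 1) < a (i + 1) ∧ a (i + 1) = a i + 1 := by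
  obtain ⟨i, hi, hi'⟩ : ∃ i, ¬b i < a i ∧ b (i + 1) < a (i + 1) :=
    Nat.exists_not_and_succ_of_not_zero_of_exists h_zero.not_gt ⟨j, hj⟩
  have := h_step i
  have := hb (Nat.le_add_right i 1)
  exact ⟨i, hi', by omega⟩

theorem exists_corner_above (ha : Monotone a) (hb : Monotone b)
    (ha_step : ∀ i, a (i + 1) ≤ a i + 1) (hb_step : ∀ i, b (i + 1) ≤ b i + 1)
    (h_zero : a 0 ≤ b 0) {N : ℕ} (hN : ∀ i ≥ N, a i ≤ b i) {j : ℕ} (hj : b j < a j) :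
    ∃ i, b (i + 1) < a (i + 1) ∧ a (i + 1) = a i + 1 ∧ a (i + 1 + 1) = a (i + 1) := by
  by_contra! h_no_corner
  obtain ⟨s, hs⟩ := exists_step_above ha_step hb h_zero hj
  have h_persist : ∀ i ≥ s, b (i + 1) < a (i + 1) ∧ a (i + 1) = a i + 1 := by
    intro i hi
    induction i, hi using Nat.le_induction with
    | base => exact hs
    | succ i _ ih =>
      have h_turn := h_no_corner i ih.1 ih.2
      have := ha (Nat.le_add_right (i + 1) 1)
      have := ha_step (i + 1)
      have := hb_step (i + 1)
      omega
  exact (h_persist (s + N) (by omega)).1.not_ge (hN _ (by omega))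

end NatSequences

section ExtendFin

variable {N M K : ℕ} {f : Fin (N + 1) → Fin (M + 1)} {g : Fin (N + 1) → Fin (K + 1)}

theorem extendFin_val (f : Fin (N + 1) → Fin (M + 1)) (j : Fin (N + 1)) :
    extendFin f j = f j := by
  simp only [extendFin, min_eq_left j.is_le]

theorem extendFin_monotone (hf : Monotone f) : Monotone (extendFin f) :=
  fun _ _ hij ↦ hf (Fin.mk_le_mk.2 (min_le_min_right N hij))

theorem extendFin_add_extendFin (h_add : ∀ i, (f i + g i : ℕ) = i) (i : ℕ) :
    extendFin f i + extendFin g i = min i N :=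
  h_add _

theorem extendFin_add_one_le (hg : Monotone g) (h_add : ∀ i, (f i + g i : ℕ) = i) (i : ℕ) :
    extendFin f (i + 1) ≤ extendFin f i + 1 := by
  have := extendFin_add_extendFin h_add i
  have := extendFin_add_extendFin h_add (i + 1)
  have := extendFin_monotone hg (Nat.le_add_right i 1)
  omega

theorem surjective_of_monotone_of_add_eq (hg : Monotone g) (h_add : ∀ i, (f i + g i : ℕ) = i)
    (hN : N = M + K) : Surjective f := by
  intro y
  have h_zero := extendFin_add_extendFin h_add 0
  have h_last := h_add (Fin.last N)
  rw [Fin.val_last] at h_last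
  have hy : (y : ℕ) ≤ extendFin f (Fin.last N) := by
    rw [extendFin_val]
    omega
  obtain ⟨i, hi⟩ := exists_apply_eq_of_le_add_one (extendFin_add_one_le hg h_add)
    (k := y) (by omega) hy
  exact ⟨_, Fin.ext hi⟩

end ExtendFin

section Shuffle

variable {m n : ℕ} {α β : Fin (m + n + 1) → Fin (m + 1)} {α' β' : Fin (m + n + 1) → Fin (n + 1)}

theorem isShuffle_iff_monotone :
    IsShuffle m n α α' ↔ Monotone α ∧ Monotone α' ∧ ∀ i, (α i + α' i : ℕ) = i := by
  refine ⟨fun ⟨hα, hα', _, _, h_add⟩ ↦ ⟨hα, hα', h_add⟩, fun ⟨hα, hα', h_add⟩ ↦ ?_⟩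
  have h_add' : ∀ i, (α' i + α i : ℕ) = i := fun i ↦ (add_comm _ _).trans (h_add i)
  exact ⟨hα, hα', surjective_of_monotone_of_add_eq hα' h_add rfl,
    surjective_of_monotone_of_add_eq hα h_add' (add_comm m n), h_add⟩

theorem shuffleLT_iff_lt : ShuffleLT m n α β ↔ α < β := by
  rw [lt_iff_le_and_ne]
  rfl

theorem IsShuffle.snd_unique (h : IsShuffle m n α α') (h' : IsShuffle m n α β') : α' = β' := by
  obtain ⟨_, _, _, _, h_add⟩ := h
  obtain ⟨_, _, _, _, h_add'⟩ := h'
  funext i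
  exact Fin.ext (Nat.add_left_cancel ((h_add i).trans (h_add' i).symm))

theorem IsShuffle.extendFin_eq_of_le (h : IsShuffle m n α α') {i : ℕ} (hi : m + n ≤ i) :
    extendFin α i = m := by
  obtain ⟨_, _, _, _, h_add⟩ := h
  have := extendFin_add_extendFin h_add i
  have : extendFin α i ≤ m := Fin.is_le _
  have : extendFin α' i ≤ n := Fin.is_le _
  omega

variable {k : Fin (m + n + 1)}

theorem apply_lt_of_lt_of_mem_lrCorner (hα : Monotone α) (hk : (k : ℕ) ∈ lrCorner m n α)
    {j : Fin (m + n + 1)} (hj : j < k) : α j < α k := by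
  obtain ⟨_, _, _, h_enter⟩ := hk
  have h_le : extendFin α j ≤ extendFin α (k - 1) := extendFin_monotone hα (by omega)
  rw [Fin.lt_def, ← extendFin_val, ← extendFin_val]
  omega

theorem apply_pos_of_mem_lrCorner (hk : (k : ℕ) ∈ lrCorner m n α) : 0 < α k := by
  obtain ⟨_, _, _, h_enter⟩ := hk
  rw [Fin.lt_def, ← extendFin_val, h_enter]
  exact Nat.succ_pos _

theorem IsShuffle.snd_apply_lt_of_mem_lrCorner (h : IsShuffle m n α α')
    (hk : (k : ℕ) ∈ lrCorner m n α) {j : Fin (m + n + 1)} (hj : k < j) : α' k < α' j := by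
  obtain ⟨_, hα', _, _, h_add⟩ := h
  obtain ⟨_, _, h_leave, _⟩ := hk
  have h_le : extendFin α' (k + 1) ≤ extendFin α' j := extendFin_monotone hα' (by omega)
  have := extendFin_add_extendFin h_add k
  have := extendFin_add_extendFin h_add (k + 1)
  rw [Fin.lt_def, ← extendFin_val, ← extendFin_val]
  omega

theorem IsShuffle.exists_mem_lrCorner_lt (hα : IsShuffle m n α α') (hβ : IsShuffle m n β β')
    (hlt : β < α) : ∃ k : Fin (m + n + 1), (k : ℕ) ∈ lrCorner m n α ∧ β k < α k := by
  obtain ⟨_, j, hj⟩ := Pi.lt_def.1 hlt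
  have h_end : ∀ i ≥ m + n, extendFin α i ≤ extendFin β i := fun i hi ↦ by
    rw [hα.extendFin_eq_of_le hi, hβ.extendFin_eq_of_le hi]
  obtain ⟨hα_mono, hα'_mono, _, _, hα_add⟩ := hα
  obtain ⟨hβ_mono, hβ'_mono, _, _, hβ_add⟩ := hβ
  have h_zero : extendFin α 0 ≤ extendFin β 0 := by
    have := extendFin_add_extendFin hα_add 0
    omega
  obtain ⟨i, h_above, h_enter, h_leave⟩ :=
    exists_corner_above (extendFin_monotone hα_mono) (extendFin_monotone hβ_mono)
      (extendFin_add_one_le hα'_mono hα_add) (extendFin_add_one_le hβ'_mono hβ_add) h_zero h_end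
      (j := j) (by simpa only [extendFin_val, Fin.val_fin_lt] using hj)
  have hi : i + 1 < m + n := by
    by_contra! hi
    exact h_above.not_ge (h_end _ hi)
  refine ⟨⟨i + 1, by omega⟩, ⟨by simp, hi, h_leave, h_enter⟩, ?_⟩
  rwa [Fin.lt_def, ← extendFin_val, ← extendFin_val]

end Shuffle

section LowerAt

variable {m n : ℕ} {α β : Fin (m + n + 1) → Fin (m + 1)} {α' β' : Fin (m + n + 1) → Fin (n + 1)}
  {k : Fin (m + n + 1)}

/-- The pair of maps obtained from `⟨α, α'⟩` by lowering `α` and raising `α'` by one at `k`: the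
lattice path `i ↦ (α i, α' i)` with its `k`-th vertex moved one unit along the antidiagonal.
`Order.pred` and `Order.succ` saturate at the ends of `Fin`, which does not happen at a lower-right
corner. -/
def lowerAt (α : Fin (m + n + 1) → Fin (m + 1)) (α' : Fin (m + n + 1) → Fin (n + 1))
    (k : Fin (m + n + 1)) : (Fin (m + n + 1) → Fin (m + 1)) × (Fin (m + n + 1) → Fin (n + 1)) :=
  (update α k (pred (α k)), update α' k (succ (α' k)))

theorem extendFin_lowerAt_fst (α : Fin (m + n + 1) → Fin (m + 1))
    (α' : Fin (m + n + 1) → Fin (n + 1)) (k : Fin (m + n + 1)) :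
    extendFin (lowerAt α α' k).1 k = extendFin α k - 1 := by
  simp only [extendFin_val, lowerAt, update_self, val_pred_eq_sub_one]

theorem IsShuffle.isShuffle_lowerAt (h : IsShuffle m n α α') (hk : (k : ℕ) ∈ lrCorner m n α) :
    IsShuffle m n (lowerAt α α' k).1 (lowerAt α α' k).2 := by
  obtain ⟨hα, hα', h_add⟩ := isShuffle_iff_monotone.1 h
  have h_before : ∀ j < k, α j < α k := fun j ↦ apply_lt_of_lt_of_mem_lrCorner hα hk
  have h_after : ∀ j > k, α' k < α' j := fun j ↦ h.snd_apply_lt_of_mem_lrCorner hk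
  refine isShuffle_iff_monotone.2 ⟨?_, ?_, fun j ↦ ?_⟩
  · exact monotone_update hα (fun j hj ↦ le_pred_of_lt (h_before j hj))
      fun j hj ↦ (pred_le _).trans (hα hj.le)
  · exact monotone_update hα' (fun j hj ↦ (hα' hj.le).trans (le_succ _))
      fun j hj ↦ succ_le_of_lt (h_after j hj)
  · rcases eq_or_ne j k with rfl | hj
    · have h_next : j < Fin.last (m + n) := Fin.lt_def.2 hk.2.1
      have h_pos : 0 < (α j : ℕ) := apply_pos_of_mem_lrCorner hk
      have h_succ := val_succ_eq_add_one (not_isMax_iff.2 ⟨_, h_after _ h_next⟩)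
      have := h_add j
      simp only [lowerAt, update_self, val_pred_eq_sub_one]
      omega
    · simpa [lowerAt, hj] using h_add j

theorem IsShuffle.isImmPred_lowerAt (h : IsShuffle m n α α') (hk : (k : ℕ) ∈ lrCorner m n α) :
    IsImmPred m n (lowerAt α α' k).1 (lowerAt α α' k).2 α α' := by
  have h_cov : (lowerAt α α' k).1 ⋖ α :=
    update_pred_covBy (apply_pos_of_mem_lrCorner hk).not_isMin
  refine ⟨h.isShuffle_lowerAt hk, shuffleLT_iff_lt.2 h_cov.lt, fun γ γ' _ ⟨h_lower, h_upper⟩ ↦ ?_⟩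
  exact h_cov.2 (shuffleLT_iff_lt.1 h_lower) (shuffleLT_iff_lt.1 h_upper)

theorem IsImmPred.exists_lowerAt_eq (hα : IsShuffle m n α α') (h : IsImmPred m n β β' α α') :
    ∃ k : Fin (m + n + 1), (k : ℕ) ∈ lrCorner m n α ∧ lowerAt α α' k = (β, β') := by
  obtain ⟨hβ, hlt, h_none⟩ := h
  rw [shuffleLT_iff_lt] at hlt
  obtain ⟨k, hk, hβk⟩ := hα.exists_mem_lrCorner_lt hβ hlt
  have h_lower := hα.isImmPred_lowerAt hk
  have h_le : β ≤ (lowerAt α α' k).1 := le_update_pred hlt.le hβk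
  have h_eq : (lowerAt α α' k).1 = β := by
    by_contra h_ne
    exact h_none _ _ h_lower.1 ⟨⟨h_le, Ne.symm h_ne⟩, h_lower.2.1⟩
  exact ⟨k, hk, Prod.ext h_eq ((h_eq ▸ h_lower.1).snd_unique hβ)⟩

theorem bijOn_lowerAt (hα : IsShuffle m n α α') :
    Set.BijOn (lowerAt α α') {k | (k : ℕ) ∈ lrCorner m n α} {p | IsImmPred m n p.1 p.2 α α'} := by
  refine ⟨fun k hk ↦ hα.isImmPred_lowerAt hk, fun k hk l _ hkl ↦ ?_, fun p hp ↦ ?_⟩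
  · exact eq_of_update_pred_eq (apply_pos_of_mem_lrCorner hk).not_isMin (congrArg Prod.fst hkl)
  · exact hp.exists_lowerAt_eq hα

theorem val_ofNat_of_mem_lrCorner {i : ℕ} (hi : i ∈ lrCorner m n α) :
    (Fin.ofNat (m + n + 1) i : ℕ) = i :=
  Nat.mod_eq_of_lt (Nat.lt_of_succ_lt (Nat.lt_succ_of_le hi.2.1))

theorem bijOn_ofNat_lrCorner (α : Fin (m + n + 1) → Fin (m + 1)) :
    Set.BijOn (Fin.ofNat (m + n + 1)) (lrCorner m n α) {k | (k : ℕ) ∈ lrCorner m n α} := by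
  have h_inv : Set.InvOn Fin.val (Fin.ofNat (m + n + 1)) (lrCorner m n α)
      {k | (k : ℕ) ∈ lrCorner m n α} :=
    ⟨fun _ ↦ val_ofNat_of_mem_lrCorner, fun k _ ↦ Fin.ofNat_val_eq_self k⟩
  refine h_inv.bijOn (fun i hi ↦ ?_) fun _ hk ↦ hk
  rwa [Set.mem_ofPred_eq, val_ofNat_of_mem_lrCorner hi]

end LowerAt

/-- The assignment sending each `i` in the lower-right corner set of a shuffle
`⟨α,α'⟩` to the unique shuffle agreeing with `α` away from `i` and taking the
value `α i - 1` at `i` is a bijection onto the set of immediate predecessors of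
`⟨α,α'⟩`. -/
theorem lrCorner_bijOn_immPred (m n : ℕ)
    (α : Fin (m + n + 1) → Fin (m + 1)) (α' : Fin (m + n + 1) → Fin (n + 1))
    (hα : IsShuffle m n α α') :
    ∃ Φ : ℕ → (Fin (m + n + 1) → Fin (m + 1)) × (Fin (m + n + 1) → Fin (n + 1)),
      (∀ i ∈ lrCorner m n α,
        (∀ j : Fin (m + n + 1), (j : ℕ) ≠ i → (Φ i).1 j = α j) ∧
          extendFin (Φ i).1 i = extendFin α i - 1) ∧
      Set.BijOn Φ (lrCorner m n α)
        {p : (Fin (m + n + 1) → Fin (m + 1)) × (Fin (m + n + 1) → Fin (n + 1)) |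
          IsImmPred m n p.1 p.2 α α'} := by
  refine ⟨lowerAt α α' ∘ Fin.ofNat (m + n + 1), fun i hi ↦ ?_,
    (bijOn_lowerAt hα).comp (bijOn_ofNat_lrCorner α)⟩
  obtain ⟨k, rfl⟩ : ∃ k : Fin (m + n + 1), (k : ℕ) = i := ⟨_, val_ofNat_of_mem_lrCorner hi⟩
  rw [comp_apply, Fin.ofNat_val_eq_self]
  exact ⟨fun j hj ↦ update_of_ne (Fin.val_ne_iff.1 hj) _ _, extendFin_lowerAt_fst α α' k⟩
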